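/- For n ≥ 4, let M ⊆ {0,1}^n be the set consisting of the vectors e_i for 1 ≤ i ≤ n−2 (where e_i has a 1 in coordinate i and 0 in every other coordinate) together with the vectors 0^j1^{n−j} for 0 ≤ j ≤ n−3 (whose first j coordinates are 0 and whose remaining n−j coordinates are 1). Then the all-zeros vector 0⋯0 is adjacent in AQ_n to every vertex of M, and it is the unique vertex of AQ_n not belonging to M that is adjacent to every vertex of M. -/

import Mathlib

/-- The `n`-dimensional augmented cube: vertices are `{0,1}^n`; distinct vertices `a`, `b`
are adjacent iff either (1) they differ in exactly one coordinate `l`, or (2) there is an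
`l` such that they agree on all coordinates before `l` and differ on all coordinates from
`l` on. -/
def AQ (n : ℕ) : SimpleGraph (Fin n → Bool) where
  Adj a b := (∃ l, a l ≠ b l ∧ ∀ i, i ≠ l → a i = b i) ∨
             (∃ l, (∀ i, i < l → a i = b i) ∧ ∀ i, l ≤ i → a i ≠ b i)
  symm := by
    refine ⟨?_⟩
    rintro a b (⟨l, h1, h2⟩ | ⟨l, h1, h2⟩)
    · exact Or.inl ⟨l, h1.symm, fun i hi => (h2 i hi).symm⟩
    · exact Or.inr ⟨l, fun i hi => (h1 i hi).symm, fun i hi => (h2 i hi).symm⟩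
  loopless := by
    refine ⟨?_⟩
    rintro a (⟨l, h1, _⟩ | ⟨l, _, h2⟩)
    · exact h1 rfl
    · exact h2 l le_rfl rfl

/-!
`AQ n` is the Cayley graph of `({0,1}^n, ∆)` whose generators are the unit vectors `e_k` and the
suffixes `s_j = 0^j 1^(n-j)`. Since `s_k ∆ s_(k+1) = e_k`, a common neighbour `b` of `s_k` and
`s_(k+1)` yields two generators `b ∆ s_k` and `b ∆ s_(k+1)` that differ by `e_k`. If `k` is not the
last coordinate, the only such pair is `{s_k, s_(k+1)}`, so `b` is `0` or `e_k`. As `M` contains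
`s_0`, `s_1` and `e_0`, a common neighbour of `M` outside `M` is `0`.
-/

namespace AQ

open scoped symmDiff

variable {n : ℕ}

/-- The unit vector `e_k`, with `1` in coordinate `k` only. Coordinates are numbered from `0`. -/
def unitVec (k : Fin n) : Fin n → Bool := fun i => decide (i = k)

/-- The vector `0^j 1^(n-j)`. The index `j` is a natural number, so that `j + 1` makes sense for
every `j`; the vector is `0` for `n ≤ j`. -/
def suffixVec (j : ℕ) : Fin n → Bool := fun i => decide (j ≤ (i : ℕ))

/-- The connection set of `AQ n` as a Cayley graph of `{0,1}^n` under symmetric difference. -/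
def generators (n : ℕ) : Set (Fin n → Bool) :=
  Set.range unitVec ∪ Set.range fun j : Fin n => suffixVec j

theorem symmDiff_eq_iff_forall_ne_iff {ι : Type*} {a b c : ι → Bool} :
    a ∆ b = c ↔ ∀ i, a i ≠ b i ↔ c i = true := by
  simp only [funext_iff, Pi.symmDiff_apply, Bool.symmDiff_eq_xor, ← Bool.xor_iff_ne,
    Bool.coe_iff_coe]

theorem symmDiff_eq_unitVec_iff {a b : Fin n → Bool} {l : Fin n} :
    a ∆ b = unitVec l ↔ a l ≠ b l ∧ ∀ i, i ≠ l → a i = b i := by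
  simp only [symmDiff_eq_iff_forall_ne_iff, unitVec, decide_eq_true_eq]
  grind

theorem symmDiff_eq_suffixVec_iff {a b : Fin n → Bool} {l : Fin n} :
    a ∆ b = suffixVec l ↔ (∀ i, i < l → a i = b i) ∧ ∀ i, l ≤ i → a i ≠ b i := by
  simp only [symmDiff_eq_iff_forall_ne_iff, suffixVec, decide_eq_true_eq, Fin.val_fin_le]
  grind

theorem adj_iff_symmDiff_mem_generators {a b : Fin n → Bool} :
    (AQ n).Adj a b ↔ a ∆ b ∈ generators n := by
  simp only [generators, Set.mem_union, Set.mem_range, eq_comm (b := a ∆ b),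
    symmDiff_eq_unitVec_iff, symmDiff_eq_suffixVec_iff, AQ]

theorem unitVec_mem_generators (k : Fin n) : unitVec k ∈ generators n :=
  Or.inl ⟨k, rfl⟩

theorem suffixVec_mem_generators {j : ℕ} (hj : j < n) : suffixVec j ∈ generators n :=
  Or.inr ⟨⟨j, hj⟩, rfl⟩

theorem adj_bot_of_mem_generators {a : Fin n → Bool} (ha : a ∈ generators n) :
    (AQ n).Adj ⊥ a := by
  rwa [adj_iff_symmDiff_mem_generators, bot_symmDiff]

theorem suffixVec_symmDiff_suffixVec_succ (k : Fin n) :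
    suffixVec k ∆ suffixVec (k + 1) = unitVec k := by
  simp only [symmDiff_eq_unitVec_iff, suffixVec, ne_eq, decide_eq_decide]
  grind

theorem unitVec_eq_suffixVec_of_last {j : Fin n} (hj : (j : ℕ) + 1 = n) :
    unitVec j = suffixVec j := by
  ext i
  simp only [unitVec, suffixVec, decide_eq_decide]
  omega

theorem unitVec_symmDiff_unitVec_ne_unitVec (i j k : Fin n) :
    unitVec i ∆ unitVec j ≠ unitVec k := by
  -- The left-hand side has an even number of ones.
  rw [Ne, symmDiff_eq_unitVec_iff]
  simp only [unitVec, ne_eq, decide_eq_decide]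
  rintro ⟨differ_at_k, agree_off_k⟩
  have agree_at_i := agree_off_k i
  have agree_at_j := agree_off_k j
  grind

theorem suffixVec_symmDiff_unitVec_eq_unitVec_iff {i j k : Fin n} (hk : (k : ℕ) + 1 < n) :
    suffixVec i ∆ unitVec j = unitVec k ↔ i = k ∧ unitVec j = suffixVec (k + 1) := by
  constructor
  · intro h
    obtain ⟨differ_at_k, agree_off_k⟩ := symmDiff_eq_unitVec_iff.mp h
    simp only [suffixVec, unitVec, ne_eq, decide_eq_decide] at differ_at_k agree_off_k
    have agree_at_last := agree_off_k ⟨n - 1, by omega⟩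
    have agree_at_succ := agree_off_k ⟨k + 1, hk⟩
    have agree_at_i := agree_off_k i
    simp only [Fin.ext_iff] at differ_at_k agree_at_last agree_at_succ agree_at_i
    have j_last : (j : ℕ) + 1 = n := by omega
    have i_le_k : (i : ℕ) ≤ k := by omega
    have j_eq_succ : (j : ℕ) = k + 1 := by omega
    have i_eq_k : i = k := by omega
    exact ⟨i_eq_k, j_eq_succ ▸ unitVec_eq_suffixVec_of_last j_last⟩
  · rintro ⟨rfl, hj⟩
    rw [hj, suffixVec_symmDiff_suffixVec_succ]

theorem suffixVec_symmDiff_suffixVec_eq_unitVec_iff {i j k : Fin n} (hk : (k : ℕ) + 1 < n) :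
    suffixVec i ∆ suffixVec j = unitVec k ↔
      (i = k ∧ (j : ℕ) = k + 1) ∨ ((i : ℕ) = k + 1 ∧ j = k) := by
  constructor
  · intro h
    obtain ⟨differ_at_k, agree_off_k⟩ := symmDiff_eq_unitVec_iff.mp h
    simp only [suffixVec, ne_eq, decide_eq_decide] at differ_at_k agree_off_k
    have agree_at_succ := agree_off_k ⟨k + 1, hk⟩
    have agree_at_i := agree_off_k i
    have agree_at_j := agree_off_k j
    simp only [Fin.ext_iff] at agree_at_succ agree_at_i agree_at_j
    omega
  · rintro (⟨rfl, hj⟩ | ⟨hi, rfl⟩)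
    · rw [hj, suffixVec_symmDiff_suffixVec_succ]
    · rw [hi, symmDiff_comm, suffixVec_symmDiff_suffixVec_succ]

theorem eq_suffixVec_of_mem_generators_of_symmDiff_eq_unitVec {x y : Fin n → Bool} {k : Fin n}
    (hk : (k : ℕ) + 1 < n) (hx : x ∈ generators n) (hy : y ∈ generators n)
    (h : x ∆ y = unitVec k) :
    x = suffixVec k ∨ x = suffixVec (k + 1) := by
  rcases hx with ⟨i, rfl⟩ | ⟨i, rfl⟩ <;> rcases hy with ⟨j, rfl⟩ | ⟨j, rfl⟩
  · exact absurd h (unitVec_symmDiff_unitVec_ne_unitVec i j k)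
  · rw [symmDiff_comm] at h
    exact .inr ((suffixVec_symmDiff_unitVec_eq_unitVec_iff hk).mp h).2
  · exact .inl (by rw [← ((suffixVec_symmDiff_unitVec_eq_unitVec_iff hk).mp h).1])
  · rcases (suffixVec_symmDiff_suffixVec_eq_unitVec_iff hk).mp h with ⟨rfl, -⟩ | ⟨hi, -⟩
    · exact .inl rfl
    · exact .inr (congrArg suffixVec hi)

theorem commonNeighbors_suffixVec_suffixVec_succ {k : Fin n} (hk : (k : ℕ) + 1 < n) :
    (AQ n).commonNeighbors (suffixVec k) (suffixVec (k + 1)) = {⊥, unitVec k} := by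
  have suffix_symmDiff := suffixVec_symmDiff_suffixVec_succ k
  ext b
  simp only [SimpleGraph.mem_commonNeighbors, adj_iff_symmDiff_mem_generators,
    Set.mem_insert_iff, Set.mem_singleton_iff]
  constructor
  · rintro ⟨hb, hb_succ⟩
    have differ : (suffixVec k ∆ b) ∆ (suffixVec (k + 1) ∆ b) = unitVec k := by
      rw [symmDiff_symmDiff_symmDiff_comm, symmDiff_self, symmDiff_bot, suffix_symmDiff]
    rcases eq_suffixVec_of_mem_generators_of_symmDiff_eq_unitVec hk hb hb_succ differ with h | h
    · exact .inl (symmDiff_eq_left.mp h)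
    · exact .inr (by rw [← suffix_symmDiff, ← h, symmDiff_symmDiff_cancel_left])
  · rintro (rfl | rfl)
    · simp only [symmDiff_bot]
      exact ⟨suffixVec_mem_generators k.isLt, suffixVec_mem_generators hk⟩
    · rw [← suffix_symmDiff, symmDiff_symmDiff_cancel_left, symmDiff_comm (suffixVec k),
        symmDiff_symmDiff_cancel_left]
      exact ⟨suffixVec_mem_generators hk, suffixVec_mem_generators k.isLt⟩

end AQ

theorem stmt_19 (n : ℕ) (hn : 4 ≤ n)
    (M : Set (Fin n → Bool))
    (hM : M = {v | ∃ k : Fin n, (k : ℕ) ≤ n - 3 ∧ v = fun j : Fin n => decide (j = k)} ∪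
              {v | ∃ j : ℕ, j ≤ n - 3 ∧ v = fun i : Fin n => decide (j ≤ (i : ℕ))}) :
    (fun _ => false) ∉ M ∧
    (∀ m ∈ M, (AQ n).Adj (fun _ => false) m) ∧
    (∀ b : Fin n → Bool, b ∉ M → (∀ m ∈ M, (AQ n).Adj b m) → b = fun _ => false) := by
  have adj_zero : ∀ m ∈ M, (AQ n).Adj (fun _ => false) m := by
    rw [hM]
    rintro _ (⟨k, -, rfl⟩ | ⟨j, hj, rfl⟩)
    · exact AQ.adj_bot_of_mem_generators (AQ.unitVec_mem_generators k)
    · exact AQ.adj_bot_of_mem_generators (AQ.suffixVec_mem_generators (by omega))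
  refine ⟨fun zero_mem => (AQ n).irrefl (adj_zero _ zero_mem), adj_zero, fun b hbM hb => ?_⟩
  let k : Fin n := ⟨0, by omega⟩
  have hk : (k : ℕ) + 1 < n := show 0 + 1 < n by omega
  have unitVec_mem : AQ.unitVec k ∈ M := hM ▸ .inl ⟨k, Nat.zero_le _, rfl⟩
  have suffixVec_mem : AQ.suffixVec k ∈ M := hM ▸ .inr ⟨0, by omega, rfl⟩
  have suffixVec_succ_mem : AQ.suffixVec (k + 1) ∈ M := hM ▸ .inr ⟨1, by omega, rfl⟩
  have b_mem : b ∈ (AQ n).commonNeighbors (AQ.suffixVec k) (AQ.suffixVec (k + 1)) :=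
    ⟨(hb _ suffixVec_mem).symm, (hb _ suffixVec_succ_mem).symm⟩
  rw [AQ.commonNeighbors_suffixVec_suffixVec_succ hk] at b_mem
  rcases b_mem with b_eq_zero | rfl
  · exact b_eq_zero
  · exact absurd unitVec_mem hbM
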